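/- arXiv:1904.06480 — 3 statements merged into one kernel-verified Lean document; each statement's English description precedes it below -/
import Mathlib

section
/- Let λ_τ > 0 and μ_τ > 0. Let A be exponentially distributed with rate λ_τ and B_τ be exponentially distributed with rate μ_τ. Let B and S be nonnegative random variables with 0 ≤ S ≤ B almost surely and E[B^2] < ∞, such that the pair (B,S), the variable A, and the variable B_τ are mutually independent. Then for every μ > 0, |μ·P(S/μ > B_τ and B/μ < A) − μ_τ·E[S]| ≤ (λ_τ + μ_τ)^2·E[B^2]/μ. -/
open MeasureTheory ProbabilityTheory

/-- Mutual independence of three random variables `f, g, h` (with values in possibly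
different measurable spaces), expressed through the factorization of the joint law
over all triples of measurable sets.  (Taking one of the sets to be `univ` recovers
the pairwise factorizations, so this is the usual notion of mutual independence.) -/
def MutIndep3 {Ω α β γ : Type*} [MeasurableSpace Ω] [MeasurableSpace α]
    [MeasurableSpace β] [MeasurableSpace γ]
    (P : MeasureTheory.Measure Ω) (f : Ω → α) (g : Ω → β) (h : Ω → γ) : Prop :=
  ∀ s t u, MeasurableSet s → MeasurableSet t → MeasurableSet u →
    P (f ⁻¹' s ∩ g ⁻¹' t ∩ h ⁻¹' u) = P (f ⁻¹' s) * P (g ⁻¹' t) * P (h ⁻¹' u)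

theorem bcs_exp_upper (u : ℝ) (hu : 0 ≤ u) : Real.exp (-u) ≤ 1 - u + u ^ 2 := by
  have h1 : u + 1 ≤ Real.exp u := Real.add_one_le_exp u
  have h2 : Real.exp (-u) * Real.exp u = 1 := by
    rw [← Real.exp_add]; simp
  have h3 := Real.exp_pos (-u)
  have h4 : Real.exp (-u) * (u + 1) ≤ 1 := by
    exact (mul_le_mul_of_nonneg_left h1 h3.le).trans_eq h2
  have h5 : (1 - u + u ^ 2) * (u + 1) ≥ 1 := by nlinarith [pow_nonneg hu 3]
  by_contra h
  push Not at h
  nlinarith [mul_lt_mul_of_pos_right h (by linarith : 0 < u + 1)]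

theorem bcs_real_bound (l m x y : ℝ) (hl : 0 < l) (hm : 0 < m) (hy : 0 ≤ y) (hyx : y ≤ x) :
    |Real.exp (-l * x) * (1 - Real.exp (-m * y)) - m * y| ≤ (l + m) ^ 2 * x ^ 2 := by
  have hx : 0 ≤ x := hy.trans hyx
  have hmy : 0 ≤ m * y := by positivity
  have hlx : 0 ≤ l * x := by positivity
  have e1 := bcs_exp_upper (m * y) hmy
  have e2 := Real.add_one_le_exp (-(m * y))
  have e3 := Real.add_one_le_exp (-(l * x))
  have e4 : Real.exp (-(l * x)) ≤ 1 := Real.exp_le_one_iff.2 (by linarith)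
  have e5 : Real.exp (-(m * y)) ≤ 1 := Real.exp_le_one_iff.2 (by linarith)
  rw [neg_mul, neg_mul]
  have e6 := Real.exp_pos (-(l * x))
  set p := Real.exp (-(l * x))
  set q := Real.exp (-(m * y))
  have hmyx : m * y ≤ m * x := mul_le_mul_of_nonneg_left hyx hm.le
  have hmx : 0 ≤ m * x := by positivity
  rw [abs_le]
  constructor
  · have a1 : (1 - l * x) * (1 - q) ≤ p * (1 - q) :=
      mul_le_mul_of_nonneg_right (by linarith) (by linarith)
    have a2 : (l * x) * (1 - q) ≤ (l * x) * (m * x) :=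
      mul_le_mul_of_nonneg_left (by linarith) hlx
    have a3 : (m * y) ^ 2 ≤ (m * x) ^ 2 := pow_le_pow_left₀ hmy hmyx 2
    nlinarith [sq_nonneg (l * x), mul_nonneg hlx hmx]
  · have a1 : p * (1 - q) ≤ 1 * (1 - q) :=
      mul_le_mul_of_nonneg_right e4 (by linarith)
    have : 0 ≤ (l + m) ^ 2 * x ^ 2 := by positivity
    linarith

theorem bcs_lt_prob {Ω : Type*} [MeasurableSpace Ω] (P : Measure Ω) [IsProbabilityMeasure P]
    (m : ℝ) (T : Ω → ℝ) (hT : Measurable T)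
    (hexp : ∀ t : ℝ, 0 ≤ t → P {ω | T ω > t} = ENNReal.ofReal (Real.exp (-m * t)))
    (s : ℝ) (hs : 0 ≤ s) : P.real {ω | T ω < s} = 1 - Real.exp (-m * s) := by
  have hle : ∀ t : ℝ, 0 ≤ t → P.real {ω | T ω ≤ t} = 1 - Real.exp (-m * t) := by
    intro t ht
    have h1 : {ω | T ω ≤ t} = {ω | T ω > t}ᶜ := by ext; simp
    have h2 : MeasurableSet {ω | T ω > t} := hT measurableSet_Ioi
    rw [h1, probReal_compl_eq_one_sub h2, measureReal_def, hexp t ht,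
      ENNReal.toReal_ofReal (Real.exp_pos _).le]
  apply le_antisymm
  · rw [← hle s hs]
    exact measureReal_mono (fun ω (h : T ω < s) => show T ω ≤ s from h.le)
  · rcases hs.eq_or_lt with rfl | hs
    · simp
    · have hc : Filter.Tendsto (fun t : ℝ => 1 - Real.exp (-m * t)) (nhdsWithin s (Set.Iio s))
          (nhds (1 - Real.exp (-m * s))) := by
        apply tendsto_nhdsWithin_of_tendsto_nhds
        apply Continuous.tendsto (f := fun t : ℝ => 1 - Real.exp (-m * t))
        fun_prop
      refine le_of_tendsto hc ?_
      filter_upwards [Ioo_mem_nhdsLT hs] with t ht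
      rw [← hle t ht.1.le]
      exact measureReal_mono (fun ω h => lt_of_le_of_lt h ht.2)

theorem bcs_joint {Ω : Type*} [MeasurableSpace Ω] (P : Measure Ω) [IsProbabilityMeasure P]
    (A T : Ω → ℝ) (X : Ω → ℝ × ℝ) (hA : Measurable A) (hT : Measurable T) (hX : Measurable X)
    (h : MutIndep3 P X A T) :
    P.map (fun ω => (X ω, A ω, T ω)) = (P.map X).prod ((P.map A).prod (P.map T)) := by
  have := Measure.isProbabilityMeasure_map (μ := P) hA.aemeasurable
  have := Measure.isProbabilityMeasure_map (μ := P) hT.aemeasurable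
  have := Measure.isProbabilityMeasure_map (μ := P) hX.aemeasurable
  have hm : Measurable (fun ω => (X ω, A ω, T ω)) := by fun_prop
  have := Measure.isProbabilityMeasure_map (μ := P) hm.aemeasurable
  apply Measure.ext_prod₃
  intro s t u hs ht hu
  rw [Measure.map_apply hm (hs.prod (ht.prod hu)), Measure.prod_prod, Measure.prod_prod,
    Measure.map_apply hX hs, Measure.map_apply hA ht, Measure.map_apply hT hu, ← mul_assoc,
    ← h s t u hs ht hu]
  congr 1
  ext ω
  simp [and_assoc]

/-- Let `λτ > 0` and `μτ > 0`.  Let `A` be exponential with rate `λτ` and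
`Bτ` exponential with rate `μτ`.  Let `B, S` be nonnegative random variables with
`0 ≤ S ≤ B` a.s. and `E[B²] < ∞`, such that the pair `(B, S)`, the variable `A`, and the
variable `Bτ` are mutually independent.  Then for every `μ > 0`,
`|μ P(S/μ > Bτ ∧ B/μ < A) - μτ E[S]| ≤ (λτ + μτ)² E[B²] / μ`. -/
theorem busy_cycle_service_prob_bound
    {Ω : Type*} [MeasurableSpace Ω] (P : Measure Ω) [IsProbabilityMeasure P]
    (lamτ muτ : ℝ) (hlam : 0 < lamτ) (hmu : 0 < muτ)
    (A Bτ B S : Ω → ℝ) (hA : Measurable A) (hBτ : Measurable Bτ)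
    (hB : Measurable B) (hS : Measurable S)
    (hexpA : ∀ t : ℝ, 0 ≤ t → P {ω | A ω > t} = ENNReal.ofReal (Real.exp (-lamτ * t)))
    (hexpBτ : ∀ t : ℝ, 0 ≤ t → P {ω | Bτ ω > t} = ENNReal.ofReal (Real.exp (-muτ * t)))
    (hS0 : ∀ᵐ ω ∂P, 0 ≤ S ω) (hSB : ∀ᵐ ω ∂P, S ω ≤ B ω)
    (hB2 : Integrable (fun ω => B ω ^ 2) P)
    (hindep : MutIndep3 P (fun ω => (B ω, S ω)) A Bτ) :
    ∀ μ : ℝ, 0 < μ →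
      |μ * (P {ω | S ω / μ > Bτ ω ∧ B ω / μ < A ω}).toReal - muτ * (∫ ω, S ω ∂P)| ≤
        (lamτ + muτ) ^ 2 * (∫ ω, B ω ^ 2 ∂P) / μ := by
  intro μ hμ
  have hX : Measurable (fun ω => (B ω, S ω)) := by fun_prop
  have hm : Measurable (fun ω => ((B ω, S ω), A ω, Bτ ω)) := by fun_prop
  have hJ := bcs_joint P A Bτ _ hA hBτ hX hindep
  have := Measure.isProbabilityMeasure_map (μ := P) hA.aemeasurable
  have := Measure.isProbabilityMeasure_map (μ := P) hBτ.aemeasurable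
  let E : Set ((ℝ × ℝ) × (ℝ × ℝ)) := {z | z.1.2 / μ > z.2.2 ∧ z.1.1 / μ < z.2.1}
  have hE : MeasurableSet E :=
    (measurableSet_lt (f := fun z : (ℝ × ℝ) × (ℝ × ℝ) => z.2.2) (g := fun z => z.1.2 / μ)
      (by fun_prop) (by fun_prop)).inter
      (measurableSet_lt (f := fun z : (ℝ × ℝ) × (ℝ × ℝ) => z.1.1 / μ) (g := fun z => z.2.1)
        (by fun_prop) (by fun_prop))
  let G : ℝ × ℝ → ENNReal := fun x => ((P.map A).prod (P.map Bτ)) (Prod.mk x ⁻¹' E)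
  have hG : Measurable G := measurable_measure_prodMk_left hE
  have hev : P {ω | S ω / μ > Bτ ω ∧ B ω / μ < A ω} = ∫⁻ ω, G (B ω, S ω) ∂P := by
    have h1 : P {ω | S ω / μ > Bτ ω ∧ B ω / μ < A ω}
        = P.map (fun ω => ((B ω, S ω), A ω, Bτ ω)) E := by
      rw [Measure.map_apply hm hE]; rfl
    rw [h1, hJ, Measure.prod_apply hE, lintegral_map hG hX]
  have hGle : ∀ x, G x ≤ 1 := fun x => prob_le_one
  have hGm : Measurable (fun ω => G (B ω, S ω)) := hG.comp hX
  have hev2 : (P {ω | S ω / μ > Bτ ω ∧ B ω / μ < A ω}).toReal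
      = ∫ ω, (G (B ω, S ω)).toReal ∂P := by
    rw [hev, integral_toReal hGm.aemeasurable]
    exact Filter.Eventually.of_forall fun ω => (hGle _).trans_lt ENNReal.one_lt_top
  have hGint : Integrable (fun ω => (G (B ω, S ω)).toReal) P := by
    refine Integrable.of_bound hGm.ennreal_toReal.aestronglyMeasurable 1
      (Filter.Eventually.of_forall fun ω => ?_)
    rw [Real.norm_eq_abs, abs_of_nonneg ENNReal.toReal_nonneg]
    exact ENNReal.toReal_le_of_le_ofReal zero_le_one (by simpa using hGle _)
  have hSint : Integrable S P := by
    refine Integrable.mono' ((integrable_const (1 : ℝ)).add hB2) hS.aestronglyMeasurable ?_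
    filter_upwards [hS0, hSB] with ω h0 h1
    rw [Real.norm_eq_abs, abs_of_nonneg h0]
    simp only [Pi.add_apply]
    nlinarith [sq_nonneg (B ω - 1), sq_nonneg (B ω)]
  rw [hev2, ← integral_const_mul, ← integral_const_mul,
    ← integral_sub (hGint.const_mul μ) (hSint.const_mul muτ), ← integral_const_mul,
    ← integral_div]
  rw [← Real.norm_eq_abs]
  refine norm_integral_le_of_norm_le ((hB2.const_mul _).div_const μ) ?_
  filter_upwards [hS0, hSB] with ω h0 h1
  have hGv : (G (B ω, S ω)).toReal
      = Real.exp (-lamτ * (B ω / μ)) * (1 - Real.exp (-muτ * (S ω / μ))) := by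
    have hset : Prod.mk (B ω, S ω) ⁻¹' E = Set.Ioi (B ω / μ) ×ˢ Set.Iio (S ω / μ) := by
      ext z; simp [E, and_comm]
    have hb : 0 ≤ B ω / μ := div_nonneg (h0.trans h1) hμ.le
    have e1 : A ⁻¹' Set.Ioi (B ω / μ) = {ω' | A ω' > B ω / μ} := rfl
    have e2 : Bτ ⁻¹' Set.Iio (S ω / μ) = {ω' | Bτ ω' < S ω / μ} := rfl
    change (((P.map A).prod (P.map Bτ)) (Prod.mk (B ω, S ω) ⁻¹' E)).toReal = _
    rw [hset, Measure.prod_prod, ENNReal.toReal_mul, Measure.map_apply hA measurableSet_Ioi,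
      Measure.map_apply hBτ measurableSet_Iio, e1, e2, hexpA _ hb,
      ENNReal.toReal_ofReal (Real.exp_pos _).le, ← measureReal_def,
      bcs_lt_prob P muτ Bτ hBτ hexpBτ _ (div_nonneg h0 hμ.le)]
  have key := bcs_real_bound lamτ muτ (B ω / μ) (S ω / μ) hlam hmu (div_nonneg h0 hμ.le)
    (div_le_div_of_nonneg_right h1 hμ.le)
  rw [← hGv] at key
  have k2 := mul_le_mul_of_nonneg_left key hμ.le
  rw [Real.norm_eq_abs]
  have k3 : μ * (G (B ω, S ω)).toReal - muτ * S ω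
      = μ * ((G (B ω, S ω)).toReal - muτ * (S ω / μ)) := by field_simp
  have k4 : (lamτ + muτ) ^ 2 * B ω ^ 2 / μ = μ * ((lamτ + muτ) ^ 2 * (B ω / μ) ^ 2) := by
    field_simp
  rw [k3, k4, abs_mul, abs_of_pos hμ]
  exact k2
end

section
/- Let λ_τ > 0 and μ_τ > 0. Let A be exponentially distributed with rate λ_τ and B_τ be exponentially distributed with rate μ_τ. Let B be a nonnegative random variable with E[B^2] < ∞ and E[B] > 0, such that B, A and B_τ are mutually independent. Then for every μ > 0 satisfying 2μ·λ_τ·E[B] − λ_τ^2·E[B^2] > 0, the conditional probability satisfies P(B/μ > B_τ | B/μ > A) ≤ (λ_τ + μ_τ)^2·E[B^2] / (2μ·λ_τ·E[B] − λ_τ^2·E[B^2]). In particular, P(B/μ > B_τ | B/μ > A) → 0 as μ → ∞. -/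
open MeasureTheory ProbabilityTheory Filter

lemma exp_neg_quad {z : ℝ} (hz : 0 ≤ z) : Real.exp (-z) ≤ 1 - z + z ^ 2 / 2 := by
  rw [Real.exp_neg]
  have h := Real.quadratic_le_exp_of_nonneg hz
  have h1 : 0 < 1 - z + z ^ 2 / 2 := by nlinarith [sq_nonneg (z - 1)]
  rw [inv_le_iff_one_le_mul₀ (Real.exp_pos z)]
  have h2 := mul_le_mul_of_nonneg_left h h1.le
  nlinarith [sq_nonneg (z ^ 2)]

/-- Upper and lower bounds for `P (X < x)` when `X` is exponential. -/
lemma exp_law_bounds {Ω : Type*} [MeasurableSpace Ω] (P : Measure Ω) [IsProbabilityMeasure P]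
    (r : ℝ) (hr : 0 < r) (X : Ω → ℝ) (hX : Measurable X)
    (h : ∀ t : ℝ, 0 ≤ t → P {ω | X ω > t} = ENNReal.ofReal (Real.exp (-r * t)))
    (x : ℝ) (hx : 0 ≤ x) :
    (P.map X).real (Set.Iio x) ≤ r * x ∧
      r * x - r ^ 2 * x ^ 2 / 2 ≤ (P.map X).real (Set.Iio x) := by
  have := Measure.isProbabilityMeasure_map (μ := P) hX.aemeasurable
  have key : ∀ t : ℝ, 0 ≤ t → (P.map X).real (Set.Iic t) = 1 - Real.exp (-(r * t)) := by
    intro t ht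
    have h1 : (P.map X).real (Set.Ioi t) = Real.exp (-(r * t)) := by
      rw [Measure.real, Measure.map_apply hX measurableSet_Ioi]
      have := h t ht
      change P (X ⁻¹' Set.Ioi t) = _ at this
      rw [this, ENNReal.toReal_ofReal (Real.exp_pos _).le, neg_mul]
    rw [← h1, ← Set.compl_Iic, probReal_compl_eq_one_sub measurableSet_Iic]
    ring
  constructor
  · calc _ ≤ (P.map X).real (Set.Iic x) := measureReal_mono Set.Iio_subset_Iic_self
      _ ≤ _ := by
        rw [key x hx]
        have := Real.one_sub_le_exp_neg (r * x)
        linarith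
  · rcases hx.eq_or_lt with h0 | h0
    · subst h0; simp
    · have hc : Tendsto (fun y : ℝ => r * y - r ^ 2 * y ^ 2 / 2) (nhdsWithin x (Set.Iio x))
          (nhds (r * x - r ^ 2 * x ^ 2 / 2)) := by
        apply Tendsto.mono_left _ nhdsWithin_le_nhds
        exact Continuous.tendsto (by fun_prop) x
      refine le_of_tendsto hc ?_
      filter_upwards [Ioo_mem_nhdsLT h0] with y hy
      calc _ ≤ 1 - Real.exp (-(r * y)) := by
            have := exp_neg_quad (mul_nonneg hr.le hy.1.le)
            nlinarith
        _ = (P.map X).real (Set.Iic y) := (key y hy.1.le).symm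
        _ ≤ _ := measureReal_mono (Set.Iic_subset_Iio.2 hy.2)

lemma main_bound
    {Ω : Type*} [MeasurableSpace Ω] (P : Measure Ω) [IsProbabilityMeasure P]
    (lamτ muτ : ℝ) (hlam : 0 < lamτ) (hmu : 0 < muτ)
    (A Bτ B : Ω → ℝ) (hA : Measurable A) (hBτ : Measurable Bτ) (hB : Measurable B)
    (hexpA : ∀ t : ℝ, 0 ≤ t → P {ω | A ω > t} = ENNReal.ofReal (Real.exp (-lamτ * t)))
    (hexpBτ : ∀ t : ℝ, 0 ≤ t → P {ω | Bτ ω > t} = ENNReal.ofReal (Real.exp (-muτ * t)))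
    (hB0 : ∀ ω, 0 ≤ B ω)
    (hB2 : Integrable (fun ω => B ω ^ 2) P)
    (hindep : MutIndep3 P B A Bτ) (μ : ℝ) (hμ : 0 < μ)
    (hpos : 0 < 2 * μ * lamτ * (∫ ω, B ω ∂P) - lamτ ^ 2 * (∫ ω, B ω ^ 2 ∂P)) :
    (P ({ω | B ω / μ > Bτ ω} ∩ {ω | B ω / μ > A ω}) / P {ω | B ω / μ > A ω}).toReal ≤
          (lamτ + muτ) ^ 2 * (∫ ω, B ω ^ 2 ∂P) /
            (2 * μ * lamτ * (∫ ω, B ω ∂P) - lamτ ^ 2 * (∫ ω, B ω ^ 2 ∂P)) := by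
  have hBi : Integrable B P :=
    ((memLp_two_iff_integrable_sq hB.aestronglyMeasurable).2 hB2).integrable one_le_two
  have := Measure.isProbabilityMeasure_map (μ := P) hA.aemeasurable
  have := Measure.isProbabilityMeasure_map (μ := P) hBτ.aemeasurable
  have := Measure.isProbabilityMeasure_map (μ := P) hB.aemeasurable
  have hm : Measurable (fun ω => (B ω, A ω, Bτ ω)) := by fun_prop
  have := Measure.isProbabilityMeasure_map (μ := P) hm.aemeasurable
  have hlaw : P.map (fun ω => (B ω, A ω, Bτ ω)) =
      (P.map B).prod ((P.map A).prod (P.map Bτ)) := by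
    apply Measure.ext_prod₃
    intro s t u hs ht hu
    rw [Measure.prod_prod, Measure.prod_prod, Measure.map_apply hB hs, Measure.map_apply hA ht,
      Measure.map_apply hBτ hu, Measure.map_apply hm (hs.prod (ht.prod hu)), ← mul_assoc,
      ← hindep s t u hs ht hu]
    congr 1
    ext ω
    simp [and_assoc]
  have hFm : ∀ ν : Measure ℝ, Measurable (fun x : ℝ => ν (Set.Iio x)) := fun ν =>
    Monotone.measurable (fun a b hab => measure_mono (Set.Iio_subset_Iio hab))
  have hnum : P.real ({ω | B ω / μ > Bτ ω} ∩ {ω | B ω / μ > A ω}) =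
      ∫ ω, (P.map A).real (Set.Iio (B ω / μ)) * (P.map Bτ).real (Set.Iio (B ω / μ)) ∂P := by
    have hS : MeasurableSet {p : ℝ × ℝ × ℝ | p.1 / μ > p.2.2 ∧ p.1 / μ > p.2.1} :=
      MeasurableSet.inter (s₁ := {p : ℝ × ℝ × ℝ | p.2.2 < p.1 / μ})
        (s₂ := {p : ℝ × ℝ × ℝ | p.2.1 < p.1 / μ})
        (measurableSet_lt (by fun_prop) (by fun_prop))
        (measurableSet_lt (by fun_prop) (by fun_prop))
    have e : P ({ω | B ω / μ > Bτ ω} ∩ {ω | B ω / μ > A ω}) =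
        ∫⁻ ω, (P.map A) (Set.Iio (B ω / μ)) * (P.map Bτ) (Set.Iio (B ω / μ)) ∂P := by
      have e1 : P ({ω | B ω / μ > Bτ ω} ∩ {ω | B ω / μ > A ω}) =
        P.map (fun ω => (B ω, A ω, Bτ ω)) {p | p.1 / μ > p.2.2 ∧ p.1 / μ > p.2.1} := by
        rw [Measure.map_apply hm hS]; rfl
      rw [e1, hlaw, Measure.prod_apply hS, lintegral_map (measurable_measure_prodMk_left hS) hB]
      refine lintegral_congr fun ω => ?_
      rw [← Measure.prod_prod]
      congr 1
      ext p
      simp [and_comm]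
    rw [Measure.real, e, ← integral_toReal]
    · simp [Measure.real]
    · exact (((hFm _).comp (hB.div_const μ)).mul ((hFm _).comp (hB.div_const μ))).aemeasurable
    · exact ae_of_all _ fun ω => ENNReal.mul_lt_top (measure_lt_top _ _) (measure_lt_top _ _)
  have hden : P.real {ω | B ω / μ > A ω} = ∫ ω, (P.map A).real (Set.Iio (B ω / μ)) ∂P := by
    have hS : MeasurableSet {p : ℝ × ℝ × ℝ | p.1 / μ > p.2.1} :=
      measurableSet_lt (by fun_prop) (by fun_prop)
    have e : P {ω | B ω / μ > A ω} = ∫⁻ ω, (P.map A) (Set.Iio (B ω / μ)) ∂P := by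
      have e1 : P {ω | B ω / μ > A ω} =
        P.map (fun ω => (B ω, A ω, Bτ ω)) {p | p.1 / μ > p.2.1} := by
        rw [Measure.map_apply hm hS]; rfl
      rw [e1, hlaw, Measure.prod_apply hS, lintegral_map (measurable_measure_prodMk_left hS) hB]
      refine lintegral_congr fun ω => ?_
      rw [← mul_one ((P.map A) (Set.Iio (B ω / μ))), ← measure_univ (μ := P.map Bτ),
        ← Measure.prod_prod]
      congr 1
      ext p
      simp
    rw [Measure.real, e, ← integral_toReal]
    · simp [Measure.real]
    · exact ((hFm _).comp (hB.div_const μ)).aemeasurable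
    · exact ae_of_all _ fun ω => measure_lt_top _ _
  have hx : ∀ ω, 0 ≤ B ω / μ := fun ω => div_nonneg (hB0 ω) hμ.le
  have hFi : Integrable (fun ω => (P.map A).real (Set.Iio (B ω / μ))) P := by
    refine Integrable.of_bound
      ((hFm _).comp (hB.div_const μ)).ennreal_toReal.aestronglyMeasurable 1 (ae_of_all _ fun ω => ?_)
    rw [Real.norm_of_nonneg measureReal_nonneg]
    exact measureReal_le_one
  have hN : P.real ({ω | B ω / μ > Bτ ω} ∩ {ω | B ω / μ > A ω}) ≤
      lamτ * muτ / μ ^ 2 * ∫ ω, B ω ^ 2 ∂P := by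
    rw [hnum, ← integral_const_mul]
    refine integral_mono_of_nonneg
      (ae_of_all _ fun ω => mul_nonneg measureReal_nonneg measureReal_nonneg)
      (hB2.const_mul _) (ae_of_all _ fun ω => ?_)
    have h1 := (exp_law_bounds P lamτ hlam A hA hexpA _ (hx ω)).1
    have h2 := (exp_law_bounds P muτ hmu Bτ hBτ hexpBτ _ (hx ω)).1
    calc _ ≤ (lamτ * (B ω / μ)) * (muτ * (B ω / μ)) :=
          mul_le_mul h1 h2 measureReal_nonneg (mul_nonneg hlam.le (hx ω))
      _ = _ := by ring
  have hD : lamτ / μ * (∫ ω, B ω ∂P) - lamτ ^ 2 / (2 * μ ^ 2) * (∫ ω, B ω ^ 2 ∂P) ≤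
      P.real {ω | B ω / μ > A ω} := by
    rw [hden, ← integral_const_mul, ← integral_const_mul,
      ← integral_sub (hBi.const_mul _) (hB2.const_mul _)]
    refine integral_mono ((hBi.const_mul _).sub (hB2.const_mul _)) hFi fun ω => ?_
    refine le_trans (le_of_eq ?_) (exp_law_bounds P lamτ hlam A hA hexpA _ (hx ω)).2
    field_simp
  have hE2 : 0 ≤ ∫ ω, B ω ^ 2 ∂P := integral_nonneg fun ω => sq_nonneg _
  rw [ENNReal.toReal_div]
  change P.real _ / P.real _ ≤ _
  set m := ∫ ω, B ω ∂P
  set q := ∫ ω, B ω ^ 2 ∂P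
  have hDeq : lamτ / μ * m - lamτ ^ 2 / (2 * μ ^ 2) * q =
      (2 * μ * lamτ * m - lamτ ^ 2 * q) / (2 * μ ^ 2) := by field_simp
  rw [hDeq] at hD
  have hD0 : 0 < (2 * μ * lamτ * m - lamτ ^ 2 * q) / (2 * μ ^ 2) := by positivity
  calc _ ≤ (lamτ * muτ / μ ^ 2 * q) / ((2 * μ * lamτ * m - lamτ ^ 2 * q) / (2 * μ ^ 2)) :=
        div_le_div₀ (by positivity) hN hD0 hD
    _ = (2 * lamτ * muτ * q) / (2 * μ * lamτ * m - lamτ ^ 2 * q) := by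
        field_simp
    _ ≤ _ := by
        apply div_le_div_of_nonneg_right _ hpos.le
        apply mul_le_mul_of_nonneg_right _ hE2
        nlinarith [sq_nonneg lamτ, sq_nonneg muτ]

/-- Let `λτ, μτ > 0`, `A` exponential with rate `λτ`, `Bτ` exponential with
rate `μτ`, and `B` nonnegative with `E[B²] < ∞` and `E[B] > 0`, with `B, A, Bτ` mutually
independent.  Then for every `μ > 0` with `2 μ λτ E[B] - λτ² E[B²] > 0`, the conditional
probability `P(B/μ > Bτ | B/μ > A) = P(B/μ > Bτ ∧ B/μ > A) / P(B/μ > A)` is at most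
`(λτ + μτ)² E[B²] / (2 μ λτ E[B] - λτ² E[B²])`; in particular it tends to `0` as `μ → ∞`. -/
theorem conditional_busy_cycle_prob_bound_and_limit
    {Ω : Type*} [MeasurableSpace Ω] (P : Measure Ω) [IsProbabilityMeasure P]
    (lamτ muτ : ℝ) (hlam : 0 < lamτ) (hmu : 0 < muτ)
    (A Bτ B : Ω → ℝ) (hA : Measurable A) (hBτ : Measurable Bτ) (hB : Measurable B)
    (hexpA : ∀ t : ℝ, 0 ≤ t → P {ω | A ω > t} = ENNReal.ofReal (Real.exp (-lamτ * t)))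
    (hexpBτ : ∀ t : ℝ, 0 ≤ t → P {ω | Bτ ω > t} = ENNReal.ofReal (Real.exp (-muτ * t)))
    (hB0 : ∀ ω, 0 ≤ B ω)
    (hB2 : Integrable (fun ω => B ω ^ 2) P)
    (hEB : 0 < ∫ ω, B ω ∂P)
    (hindep : MutIndep3 P B A Bτ) :
    (∀ μ : ℝ, 0 < μ →
        0 < 2 * μ * lamτ * (∫ ω, B ω ∂P) - lamτ ^ 2 * (∫ ω, B ω ^ 2 ∂P) →
        (P ({ω | B ω / μ > Bτ ω} ∩ {ω | B ω / μ > A ω}) / P {ω | B ω / μ > A ω}).toReal ≤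
          (lamτ + muτ) ^ 2 * (∫ ω, B ω ^ 2 ∂P) /
            (2 * μ * lamτ * (∫ ω, B ω ∂P) - lamτ ^ 2 * (∫ ω, B ω ^ 2 ∂P))) ∧
      Tendsto
        (fun μ : ℝ =>
          (P ({ω | B ω / μ > Bτ ω} ∩ {ω | B ω / μ > A ω}) / P {ω | B ω / μ > A ω}).toReal)
        atTop (nhds 0) := by
  have hb := main_bound P lamτ muτ hlam hmu A Bτ B hA hBτ hB hexpA hexpBτ hB0 hB2 hindep
  refine ⟨hb, ?_⟩
  have ht : Tendsto (fun μ : ℝ => 2 * μ * lamτ * (∫ ω, B ω ∂P) - lamτ ^ 2 * (∫ ω, B ω ^ 2 ∂P))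
      atTop atTop := by
    have h1 : Tendsto (fun μ : ℝ => (2 * lamτ * (∫ ω, B ω ∂P)) * μ) atTop atTop :=
      tendsto_id.const_mul_atTop (by positivity)
    refine (tendsto_atTop_add_const_right _ (-(lamτ ^ 2 * (∫ ω, B ω ^ 2 ∂P))) h1).congr
      fun μ => by ring
  refine tendsto_of_tendsto_of_tendsto_of_le_of_le' tendsto_const_nhds
    (Tendsto.const_div_atTop ht ((lamτ + muτ) ^ 2 * (∫ ω, B ω ^ 2 ∂P)))
    (Eventually.of_forall fun μ => ENNReal.toReal_nonneg) ?_
  filter_upwards [eventually_gt_atTop 0, ht.eventually_gt_atTop 0] with μ h1 h2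
  exact hb μ h1 h2
end

section
/- Let λ_τ > 0 and μ_τ > 0. Let A be exponentially distributed with rate λ_τ and B_τ be exponentially distributed with rate μ_τ. Let B and S be nonnegative random variables with 0 ≤ S ≤ B almost surely, E[B^2] < ∞ and E[B] > 0, such that the pair (B,S), the variable A, and the variable B_τ are mutually independent. For μ > 0 define q̄(μ) := P(S/μ > B_τ and B/μ < A) / ( P(S/μ > B_τ and B/μ < A) + P(B/μ > A) ). Then q̄(μ) → μ_τ·E[S] / (μ_τ·E[S] + λ_τ·E[B]) as μ → ∞. -/
open MeasureTheory ProbabilityTheory Filter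

lemma exp_Ioi_aux (ν : Measure ℝ) [IsProbabilityMeasure ν] (c : ℝ) (hc : 0 < c)
    (h : ∀ t : ℝ, 0 ≤ t → ν (Set.Ioi t) = ENNReal.ofReal (Real.exp (-c * t))) (t : ℝ)
    (ht : 0 ≤ t) : ν (Set.Iio t) = ENNReal.ofReal (1 - Real.exp (-c * t)) := by
  have := isProbabilityMeasure_expMeasure hc
  have hIic : ∀ t : ℝ, 0 ≤ t → ν.real (Set.Iic t) = 1 - Real.exp (-c * t) := by
    intro t ht
    have h1 := probReal_compl_eq_one_sub (μ := ν) (measurableSet_Ioi (a := t))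
    rw [Set.compl_Ioi] at h1
    rw [h1, measureReal_def, h t ht, ENNReal.toReal_ofReal (Real.exp_pos _).le]
  have hν : ν = expMeasure c := by
    apply Measure.eq_of_cdf
    ext x
    rw [cdf_expMeasure_eq hc, cdf_eq_real]
    split_ifs with hx
    · rw [hIic x hx, neg_mul]
    · have h0 := hIic 0 le_rfl
      simp only [mul_zero, Real.exp_zero, sub_self] at h0
      refine le_antisymm ?_ measureReal_nonneg
      rw [← h0]
      exact measureReal_mono (Set.Iic_subset_Iic.2 (not_le.1 hx).le)
  have hna : NullSingletonClass ν := by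
    rw [hν, expMeasure, gammaMeasure]
    infer_instance
  rw [measure_congr (Iio_ae_eq_Iic (μ := ν) (a := t)), ← hIic t ht, ofReal_measureReal]

lemma joint_law_aux {Ω : Type*} [MeasurableSpace Ω] (P : Measure Ω) [IsProbabilityMeasure P]
    {α β γ : Type*} [MeasurableSpace α] [MeasurableSpace β] [MeasurableSpace γ]
    (X : Ω → α) (Y : Ω → β) (Z : Ω → γ) (hX : Measurable X) (hY : Measurable Y)
    (hZ : Measurable Z) (h : MutIndep3 P X Y Z) :
    P.map (fun ω => (X ω, Y ω, Z ω)) = (P.map X).prod ((P.map Y).prod (P.map Z)) := by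
  have := Measure.isProbabilityMeasure_map (μ := P) hX.aemeasurable
  have := Measure.isProbabilityMeasure_map (μ := P) hY.aemeasurable
  have := Measure.isProbabilityMeasure_map (μ := P) hZ.aemeasurable
  have hm : Measurable (fun ω => (X ω, Y ω, Z ω)) := by fun_prop
  have := Measure.isProbabilityMeasure_map (μ := P) hm.aemeasurable
  apply Measure.ext_prod₃
  intro s t u hs ht hu
  rw [Measure.map_apply hm (hs.prod (ht.prod hu)), Measure.prod_prod, Measure.prod_prod,
    Measure.map_apply hX hs, Measure.map_apply hY ht, Measure.map_apply hZ hu, ← mul_assoc,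
    ← h s t u hs ht hu]
  congr 1
  ext ω
  simp [and_assoc]

lemma section_aux {Ω : Type*} [MeasurableSpace Ω] (P : Measure Ω) [IsProbabilityMeasure P]
    {α β γ : Type*} [MeasurableSpace α] [MeasurableSpace β] [MeasurableSpace γ]
    (X : Ω → α) (Y : Ω → β) (Z : Ω → γ) (hX : Measurable X) (hY : Measurable Y)
    (hZ : Measurable Z) (h : MutIndep3 P X Y Z) (s : α → Set β) (t : α → Set γ)
    (hm : MeasurableSet {p : α × β × γ | p.2.1 ∈ s p.1 ∧ p.2.2 ∈ t p.1})
    (F : Ω → ℝ) (hF : AEStronglyMeasurable F P) (hF0 : ∀ᵐ ω ∂P, 0 ≤ F ω)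
    (hFe : ∀ᵐ ω ∂P, P.map Y (s (X ω)) * P.map Z (t (X ω)) = ENNReal.ofReal (F ω)) :
    (P {ω | Y ω ∈ s (X ω) ∧ Z ω ∈ t (X ω)}).toReal = ∫ ω, F ω ∂P := by
  have := Measure.isProbabilityMeasure_map (μ := P) hX.aemeasurable
  have := Measure.isProbabilityMeasure_map (μ := P) hY.aemeasurable
  have := Measure.isProbabilityMeasure_map (μ := P) hZ.aemeasurable
  have hm3 : Measurable (fun ω => (X ω, Y ω, Z ω)) := by fun_prop
  have e1 : P {ω | Y ω ∈ s (X ω) ∧ Z ω ∈ t (X ω)} =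
      P.map (fun ω => (X ω, Y ω, Z ω)) {p : α × β × γ | p.2.1 ∈ s p.1 ∧ p.2.2 ∈ t p.1} := by
    rw [Measure.map_apply hm3 hm]; rfl
  rw [integral_eq_lintegral_of_nonneg_ae hF0 hF, e1, joint_law_aux P X Y Z hX hY hZ h,
    Measure.prod_apply hm, lintegral_map (measurable_measure_prodMk_left hm) hX]
  congr 1
  apply lintegral_congr_ae
  filter_upwards [hFe] with ω hω
  rw [← hω, ← Measure.prod_prod]
  rfl

lemma scal_bounds_aux (c x μ : ℝ) (hc : 0 < c) (hx : 0 ≤ x) (hμ : 0 < μ) :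
    0 ≤ 1 - Real.exp (-c * (x / μ)) ∧ μ * (1 - Real.exp (-c * (x / μ))) ≤ c * x := by
  have h0 : 0 ≤ x / μ := by positivity
  constructor
  · have : Real.exp (-c * (x / μ)) ≤ 1 := Real.exp_le_one_iff.2 (by nlinarith)
    linarith
  · have := Real.add_one_le_exp (-c * (x / μ))
    calc μ * (1 - Real.exp (-c * (x / μ))) ≤ μ * (c * (x / μ)) := by
          apply mul_le_mul_of_nonneg_left _ hμ.le; linarith
      _ = c * x := by field_simp

lemma scal_lim_aux (c x : ℝ) :
    Tendsto (fun μ : ℝ => μ * (1 - Real.exp (-c * (x / μ)))) atTop (nhds (c * x)) := by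
  have hd : HasDerivAt (fun y : ℝ => Real.exp (-c * (x * y))) (-c * x) 0 := by
    have := (((hasDerivAt_id (0:ℝ)).const_mul x).const_mul (-c)).exp
    simpa using this
  have h := (hasDerivAt_iff_tendsto_slope.1 hd).comp
    (tendsto_inv_atTop_nhdsGT_zero.mono_right (nhdsWithin_mono _ (fun y hy => ne_of_gt hy)))
  have h2 := h.neg
  simp only [neg_mul, neg_neg] at h2
  refine h2.congr' ?_
  filter_upwards [eventually_gt_atTop 0] with μ hμ
  simp [slope_def_field, div_eq_mul_inv]
  ring

/-- Let `λτ, μτ > 0`, `A` exponential with rate `λτ`, `Bτ` exponential with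
rate `μτ`.  Let `B, S` be nonnegative random variables with `0 ≤ S ≤ B` a.s.,
`E[B²] < ∞` and `E[B] > 0`, such that the pair `(B, S)`, the variable `A` and the
variable `Bτ` are mutually independent.  For `μ > 0` define
`q̄(μ) := P(S/μ > Bτ ∧ B/μ < A) / (P(S/μ > Bτ ∧ B/μ < A) + P(B/μ > A))`.
Then `q̄(μ) → μτ E[S] / (μτ E[S] + λτ E[B])` as `μ → ∞`. -/
theorem lower_bound_transition_prob_limit
    {Ω : Type*} [MeasurableSpace Ω] (P : Measure Ω) [IsProbabilityMeasure P]
    (lamτ muτ : ℝ) (hlam : 0 < lamτ) (hmu : 0 < muτ)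
    (A Bτ B S : Ω → ℝ) (hA : Measurable A) (hBτ : Measurable Bτ)
    (hB : Measurable B) (hS : Measurable S)
    (hexpA : ∀ t : ℝ, 0 ≤ t → P {ω | A ω > t} = ENNReal.ofReal (Real.exp (-lamτ * t)))
    (hexpBτ : ∀ t : ℝ, 0 ≤ t → P {ω | Bτ ω > t} = ENNReal.ofReal (Real.exp (-muτ * t)))
    (hS0 : ∀ᵐ ω ∂P, 0 ≤ S ω) (hSB : ∀ᵐ ω ∂P, S ω ≤ B ω)
    (hB2 : Integrable (fun ω => B ω ^ 2) P) (hEB : 0 < ∫ ω, B ω ∂P)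
    (hindep : MutIndep3 P (fun ω => (B ω, S ω)) A Bτ) :
    Tendsto
      (fun μ : ℝ =>
        (P {ω | S ω / μ > Bτ ω ∧ B ω / μ < A ω}).toReal /
          ((P {ω | S ω / μ > Bτ ω ∧ B ω / μ < A ω}).toReal +
            (P {ω | B ω / μ > A ω}).toReal))
      atTop
      (nhds (muτ * (∫ ω, S ω ∂P) / (muτ * (∫ ω, S ω ∂P) + lamτ * (∫ ω, B ω ∂P)))) := by
  have hX : Measurable (fun ω => (B ω, S ω)) := by fun_prop
  have := Measure.isProbabilityMeasure_map (μ := P) hA.aemeasurable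
  have := Measure.isProbabilityMeasure_map (μ := P) hBτ.aemeasurable
  have hB0 : ∀ᵐ ω ∂P, 0 ≤ B ω := by
    filter_upwards [hS0, hSB] with ω h1 h2 using h1.trans h2
  have hBi : Integrable B P :=
    ((memLp_two_iff_integrable_sq hB.aestronglyMeasurable).2 hB2).integrable one_le_two
  have hSi : Integrable S P := by
    refine hBi.mono hS.aestronglyMeasurable ?_
    filter_upwards [hS0, hSB] with ω h1 h2
    rw [Real.norm_of_nonneg h1, Real.norm_of_nonneg (h1.trans h2)]
    exact h2
  have hAI : ∀ t : ℝ, 0 ≤ t → P.map A (Set.Ioi t) = ENNReal.ofReal (Real.exp (-lamτ * t)) := by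
    intro t ht
    rw [Measure.map_apply hA measurableSet_Ioi, ← hexpA t ht]; rfl
  have hBI : ∀ t : ℝ, 0 ≤ t → P.map Bτ (Set.Ioi t) = ENNReal.ofReal (Real.exp (-muτ * t)) := by
    intro t ht
    rw [Measure.map_apply hBτ measurableSet_Ioi, ← hexpBτ t ht]; rfl
  have hAo := exp_Ioi_aux _ lamτ hlam hAI
  have hBo := exp_Ioi_aux _ muτ hmu hBI
  have e1 : ∀ μ : ℝ, 0 < μ → (P {ω | S ω / μ > Bτ ω ∧ B ω / μ < A ω}).toReal =
      ∫ ω, (1 - Real.exp (-muτ * (S ω / μ))) * Real.exp (-lamτ * (B ω / μ)) ∂P := by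
    intro μ hμ
    rw [← section_aux P (fun ω => (B ω, S ω)) A Bτ hX hA hBτ hindep
      (fun p => Set.Ioi (p.1 / μ)) (fun p => Set.Iio (p.2 / μ))]
    · congr 2
      ext ω
      simp [and_comm]
    · simp only [Set.mem_Ioi, Set.mem_Iio]
      apply MeasurableSet.inter
      · exact measurableSet_lt (f := fun p : (ℝ × ℝ) × ℝ × ℝ => p.1.1 / μ)
          (g := fun p => p.2.1) (by fun_prop) (by fun_prop)
      · exact measurableSet_lt (f := fun p : (ℝ × ℝ) × ℝ × ℝ => p.2.2)
          (g := fun p => p.1.2 / μ) (by fun_prop) (by fun_prop)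
    · exact Measurable.aestronglyMeasurable (by fun_prop)
    · filter_upwards [hS0] with ω h1
      exact mul_nonneg (scal_bounds_aux _ _ _ hmu h1 hμ).1 (Real.exp_pos _).le
    · filter_upwards [hS0, hB0] with ω h1 h2
      rw [ENNReal.ofReal_mul (scal_bounds_aux _ _ _ hmu h1 hμ).1, hAI _ (by positivity),
        hBo _ (by positivity), mul_comm]
  have e2 : ∀ μ : ℝ, 0 < μ → (P {ω | B ω / μ > A ω}).toReal =
      ∫ ω, (1 - Real.exp (-lamτ * (B ω / μ))) ∂P := by
    intro μ hμ
    rw [← section_aux P (fun ω => (B ω, S ω)) A Bτ hX hA hBτ hindep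
      (fun p => Set.Iio (p.1 / μ)) (fun p => Set.univ)]
    · congr 2
      ext ω
      simp
    · simp only [Set.mem_Iio, Set.mem_univ, and_true]
      exact measurableSet_lt (by fun_prop) (by fun_prop)
    · exact Measurable.aestronglyMeasurable (by fun_prop)
    · filter_upwards [hB0] with ω h1
      exact (scal_bounds_aux _ _ _ hlam h1 hμ).1
    · filter_upwards [hB0] with ω h2
      rw [hAo _ (by positivity), measure_univ, mul_one]
  have l1 : Tendsto (fun μ : ℝ => ∫ ω, μ * ((1 - Real.exp (-muτ * (S ω / μ))) *
      Real.exp (-lamτ * (B ω / μ))) ∂P) atTop (nhds (∫ ω, muτ * S ω ∂P)) := by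
    apply tendsto_integral_filter_of_dominated_convergence (fun ω => muτ * S ω)
    · exact Eventually.of_forall fun μ => Measurable.aestronglyMeasurable (by fun_prop)
    · filter_upwards [eventually_gt_atTop 0] with μ hμ
      filter_upwards [hS0, hB0] with ω h1 h2
      obtain ⟨a, b⟩ := scal_bounds_aux _ _ _ hmu h1 hμ
      have h3 : 0 ≤ B ω / μ := by positivity
      have h4 : Real.exp (-lamτ * (B ω / μ)) ≤ 1 := Real.exp_le_one_iff.2 (by nlinarith)
      have h5 := Real.exp_pos (-lamτ * (B ω / μ))
      rw [Real.norm_of_nonneg (by positivity), ← mul_assoc]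
      exact (mul_le_of_le_one_right (by positivity) h4).trans b
    · exact hSi.const_mul _
    · refine Eventually.of_forall fun ω => ?_
      have h1 := scal_lim_aux muτ (S ω)
      have h2 : Tendsto (fun μ : ℝ => Real.exp (-lamτ * (B ω / μ))) atTop (nhds 1) := by
        have h3 : Tendsto (fun μ : ℝ => -lamτ * (B ω / μ)) atTop (nhds (-lamτ * 0)) :=
          (tendsto_const_nhds.div_atTop tendsto_id).const_mul _
        rw [mul_zero] at h3
        have h4 := (Real.continuous_exp.tendsto 0).comp h3
        rw [Real.exp_zero] at h4
        exact h4
      simpa [mul_assoc] using h1.mul h2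
  have l2 : Tendsto (fun μ : ℝ => ∫ ω, μ * (1 - Real.exp (-lamτ * (B ω / μ))) ∂P) atTop
      (nhds (∫ ω, lamτ * B ω ∂P)) := by
    apply tendsto_integral_filter_of_dominated_convergence (fun ω => lamτ * B ω)
    · exact Eventually.of_forall fun μ => Measurable.aestronglyMeasurable (by fun_prop)
    · filter_upwards [eventually_gt_atTop 0] with μ hμ
      filter_upwards [hB0] with ω h1
      obtain ⟨a, b⟩ := scal_bounds_aux _ _ _ hlam h1 hμ
      rw [Real.norm_of_nonneg (by positivity)]
      exact b
    · exact hBi.const_mul _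
    · exact Eventually.of_forall fun ω => scal_lim_aux lamτ (B ω)
  simp only [integral_const_mul] at l1 l2
  have hSp : 0 ≤ ∫ ω, S ω ∂P := integral_nonneg_of_ae hS0
  have hne : muτ * (∫ ω, S ω ∂P) + lamτ * (∫ ω, B ω ∂P) ≠ 0 := by positivity
  refine (l1.div (l1.add l2) hne).congr' ?_
  filter_upwards [eventually_gt_atTop 0] with μ hμ
  simp only [Pi.div_apply]
  rw [e1 μ hμ, e2 μ hμ, ← mul_add, mul_div_mul_left _ _ hμ.ne']
end
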